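/- (Deterministic core of the sketched least squares guarantee.) Let $P \in \mathbb{R}^{N \times s}$ have full column rank with reduced QR decomposition $P = Q_P R_P$ ($Q_P^{\top} Q_P = I_s$, $R_P$ upper triangular and invertible), let $B \in \mathbb{R}^{N \times n}$, let $X_{opt} = \arg\min_X \|PX - B\|_F$ and $B^{\perp} = P X_{opt} - B$. Let $S \in \mathbb{R}^{m \times N}$ be any matrix satisfying $\|Q_P^{\top} S^{\top} S B^{\perp}\|_F^2 \le \frac{\epsilon}{4}\|B^{\perp}\|_F^2$ and $\|Q_P^{\top} S^{\top} S Q_P - I_s\|_F^2 \le \frac{1}{4}$, and let $\tilde{X}_{opt}$ be any minimizer of $\|SPX - SB\|_F$. Then $\|P\tilde{X}_{opt} - P X_{opt}\|_F^2 \le \epsilon \|B^{\perp}\|_F^2$, and consequently $\|P\tilde{X}_{opt} - B\|_F^2 \le (1+\epsilon)\|B^{\perp}\|_F^2$. -/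

import Mathlib

open Matrix

/-- The squared Frobenius norm of a real matrix. -/
def frobSq {α β : Type*} [Fintype α] [Fintype β] (A : Matrix α β ℝ) : ℝ :=
  ∑ i, ∑ j, A i j ^ 2

lemma frobSq_eq_trace {α β : Type*} [Fintype α] [Fintype β] (A : Matrix α β ℝ) :
    frobSq A = (Aᵀ * A).trace := by
  simp only [frobSq, Matrix.trace, Matrix.diag, Matrix.mul_apply, Matrix.transpose_apply]
  rw [Finset.sum_comm]
  simp only [pow_two]

lemma frobSq_nonneg {α β : Type*} [Fintype α] [Fintype β] (A : Matrix α β ℝ) :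
    0 ≤ frobSq A :=
  Finset.sum_nonneg fun _ _ => Finset.sum_nonneg fun _ _ => sq_nonneg _

lemma frobSq_add {α β : Type*} [Fintype α] [Fintype β] (A C : Matrix α β ℝ) :
    frobSq (A + C) = frobSq A + 2 * (Aᵀ * C).trace + frobSq C := by
  simp only [frobSq_eq_trace, Matrix.transpose_add, Matrix.add_mul, Matrix.mul_add,
    Matrix.trace_add]
  have : (Cᵀ * A).trace = (Aᵀ * C).trace := by
    rw [← Matrix.trace_transpose, Matrix.transpose_mul, Matrix.transpose_transpose]
  rw [this]; ring

lemma frobSq_smul {α β : Type*} [Fintype α] [Fintype β] (t : ℝ) (A : Matrix α β ℝ) :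
    frobSq (t • A) = t ^ 2 * frobSq A := by
  simp [frobSq, Finset.mul_sum, mul_pow]

lemma frobSq_eq_zero {α β : Type*} [Fintype α] [Fintype β] (A : Matrix α β ℝ)
    (h : frobSq A = 0) : A = 0 := by
  have h0 := (Finset.sum_eq_zero_iff_of_nonneg (fun i _ =>
    Finset.sum_nonneg fun j _ => sq_nonneg (A i j))).1 h
  ext i j
  have h' := (Finset.sum_eq_zero_iff_of_nonneg (fun j _ => sq_nonneg (A i j))).1
    (h0 i (Finset.mem_univ i))
  simpa using h' j (Finset.mem_univ j)

lemma frobSq_add_le {α β : Type*} [Fintype α] [Fintype β] (A C : Matrix α β ℝ) :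
    frobSq (A + C) ≤ 2 * frobSq A + 2 * frobSq C := by
  simp only [frobSq, Finset.mul_sum, ← Finset.sum_add_distrib]
  refine Finset.sum_le_sum fun i _ => Finset.sum_le_sum fun j _ => ?_
  rw [Matrix.add_apply]
  nlinarith [sq_nonneg (A i j - C i j)]

lemma frobSq_mul_le {α β γ : Type*} [Fintype α] [Fintype β] [Fintype γ]
    (A : Matrix α β ℝ) (C : Matrix β γ ℝ) :
    frobSq (A * C) ≤ frobSq A * frobSq C := by
  have hC : frobSq C = ∑ j, ∑ k, C k j ^ 2 := Finset.sum_comm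
  rw [hC, frobSq, frobSq, Finset.sum_mul_sum]
  refine Finset.sum_le_sum fun i _ => Finset.sum_le_sum fun j _ => ?_
  rw [Matrix.mul_apply]
  exact Finset.sum_mul_sq_le_sq_mul_sq _ _ _

lemma normal_eq {α β γ : Type*} [Fintype α] [Fintype β] [Fintype γ]
    (A : Matrix α β ℝ) (C : Matrix α γ ℝ) (X0 : Matrix β γ ℝ)
    (h : ∀ X : Matrix β γ ℝ, frobSq (A * X0 - C) ≤ frobSq (A * X - C)) : Aᵀ * (A * X0 - C) = 0 := by
  apply frobSq_eq_zero
  set D := A * X0 - C with hD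
  set g := frobSq (Aᵀ * D) with hg
  set k := frobSq (A * (Aᵀ * D)) with hk
  have hg0 : 0 ≤ g := frobSq_nonneg _
  have hk0 : 0 ≤ k := frobSq_nonneg _
  have key : ∀ t : ℝ, 0 ≤ 2 * (t * g) + t ^ 2 * k := by
    intro t
    have h1 := h (X0 + t • (Aᵀ * D))
    have e : A * (X0 + t • (Aᵀ * D)) - C = D + t • (A * (Aᵀ * D)) := by
      rw [Matrix.mul_add, Matrix.mul_smul, hD]; abel
    have e2 : (Dᵀ * (t • (A * (Aᵀ * D)))).trace = t * g := by
      rw [hg, frobSq_eq_trace, Matrix.mul_smul, Matrix.trace_smul, Matrix.transpose_mul,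
        Matrix.transpose_transpose, Matrix.mul_assoc, smul_eq_mul]
    rw [e, frobSq_add, e2, frobSq_smul] at h1
    linarith
  have h2 := key (-(g / (k + 1)))
  have hk1 : 0 < k + 1 := by linarith
  have h3 : g / (k + 1) * (k + 1) = g := div_mul_cancel₀ _ hk1.ne'
  set u := g / (k + 1) with hu
  have hu0 : 0 ≤ u := div_nonneg hg0 hk1.le
  rw [← h3] at h2
  have h4 : u ^ 2 * (k + 2) ≤ 0 := by nlinarith
  have h5 : u ^ 2 = 0 := by nlinarith [sq_nonneg u, mul_nonneg (sq_nonneg u) hk0]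
  have h6 : u = 0 := by simpa using h5
  rw [← h3, h6, zero_mul]

/-- deterministic core of the sketched least squares guarantee: let
`P ∈ ℝ^{N×s}` have full column rank with reduced QR decomposition `P = Q R`
(`Qᵀ Q = I`, `R` upper triangular and invertible), `B ∈ ℝ^{N×n}`, `X_opt` a minimizer of
`‖PX - B‖_F` and `B^⊥ = P X_opt - B`.  If `S ∈ ℝ^{m×N}` satisfies
`‖Qᵀ Sᵀ S B^⊥‖_F² ≤ (ε/4)‖B^⊥‖_F²` and `‖Qᵀ Sᵀ S Q - I‖_F² ≤ 1/4`, then any minimizer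
`X̃_opt` of `‖SPX - SB‖_F` satisfies `‖P X̃_opt - P X_opt‖_F² ≤ ε ‖B^⊥‖_F²`, hence
`‖P X̃_opt - B‖_F² ≤ (1+ε)‖B^⊥‖_F²`. -/
theorem sketched_least_squares_deterministic
    {N s n m : ℕ}
    (P Q : Matrix (Fin N) (Fin s) ℝ) (R : Matrix (Fin s) (Fin s) ℝ)
    (hrank : P.rank = s)
    (hQR : P = Q * R) (hQ : Qᵀ * Q = 1)
    (hRtri : R.BlockTriangular id) (hRunit : IsUnit R.det)
    (B : Matrix (Fin N) (Fin n) ℝ)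
    (Xopt : Matrix (Fin s) (Fin n) ℝ)
    (hXopt : ∀ X, frobSq (P * Xopt - B) ≤ frobSq (P * X - B))
    (S : Matrix (Fin m) (Fin N) ℝ) (ε : ℝ)
    (h1 : frobSq (Qᵀ * Sᵀ * S * (P * Xopt - B)) ≤ ε / 4 * frobSq (P * Xopt - B))
    (h2 : frobSq (Qᵀ * Sᵀ * S * Q - 1) ≤ 1 / 4)
    (Xt : Matrix (Fin s) (Fin n) ℝ)
    (hXt : ∀ X, frobSq (S * P * Xt - S * B) ≤ frobSq (S * P * X - S * B)) :
    frobSq (P * Xt - P * Xopt) ≤ ε * frobSq (P * Xopt - B) ∧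
    frobSq (P * Xt - B) ≤ (1 + ε) * frobSq (P * Xopt - B) := by
  -- the bound variable in the hypotheses elaborates to the type synonym `CStarMatrix`
  have hXopt' : ∀ X : Matrix (Fin s) (Fin n) ℝ,
      frobSq (P * Xopt - B) ≤ frobSq (P * X - B) := fun X => hXopt X
  have hXt' : ∀ X : Matrix (Fin s) (Fin n) ℝ,
      frobSq (S * P * Xt - S * B) ≤ frobSq (S * P * X - S * B) := fun X => hXt X
  clear hXopt hXt
  have hR : R * R⁻¹ = 1 := Matrix.mul_nonsing_inv R hRunit
  have n1 : Qᵀ * (Q * (R * Xopt) - B) = 0 := by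
    apply normal_eq
    intro Z
    have := hXopt' (R⁻¹ * Z)
    rwa [hQR, Matrix.mul_assoc, Matrix.mul_assoc, ← Matrix.mul_assoc R R⁻¹, hR,
      Matrix.one_mul] at this
  have n2 : (S * Q)ᵀ * ((S * Q) * (R * Xt) - S * B) = 0 := by
    apply normal_eq
    intro Z
    have := hXt' (R⁻¹ * Z)
    rwa [hQR, ← Matrix.mul_assoc S Q R, Matrix.mul_assoc (S * Q), Matrix.mul_assoc (S * Q),
      ← Matrix.mul_assoc R R⁻¹, hR, Matrix.one_mul] at this
  rw [← Matrix.mul_assoc, ← hQR] at n1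
  set D := P * Xopt - B with hD
  set Y := R * (Xt - Xopt) with hY
  have eY : P * Xt - P * Xopt = Q * Y := by
    rw [hY, hQR, ← Matrix.mul_assoc, Matrix.mul_sub]
  have fY : frobSq (Q * Y) = frobSq Y := by
    rw [frobSq_eq_trace, frobSq_eq_trace, Matrix.transpose_mul, Matrix.mul_assoc,
      ← Matrix.mul_assoc Qᵀ, hQ, Matrix.one_mul]
  have e3 : (S * Q) * (R * Xt) - S * B = S * (Q * Y + D) := by
    rw [← eY, hD, Matrix.mul_assoc, ← Matrix.mul_assoc Q, ← hQR, ← Matrix.mul_sub]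
    congr 1; abel
  rw [e3, Matrix.transpose_mul, ← Matrix.mul_assoc, Matrix.mul_add, ← Matrix.mul_assoc _ Q] at n2
  set W := Qᵀ * Sᵀ * S * D with hW
  set M := Qᵀ * Sᵀ * S * Q with hM
  have e4 : Y = (-1 : ℝ) • (W + (M - 1) * Y) := by
    rw [Matrix.sub_mul, Matrix.one_mul, eq_neg_of_add_eq_zero_left n2]
    simp
  have b1 : frobSq Y ≤ 2 * frobSq W + 2 * frobSq ((M - 1) * Y) := by
    have : frobSq Y = frobSq (W + (M - 1) * Y) := by
      conv_lhs => rw [e4]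
      rw [frobSq_smul]; norm_num
    rw [this]; exact frobSq_add_le _ _
  have b2 := frobSq_mul_le (M - 1) Y
  have b3 := mul_le_mul_of_nonneg_right h2 (frobSq_nonneg Y)
  have c1 : frobSq (P * Xt - P * Xopt) ≤ ε * frobSq D := by
    rw [eY, fY]; linarith
  refine ⟨c1, ?_⟩
  have e5 : P * Xt - B = Q * Y + D := by
    rw [← eY, hD]; abel
  rw [e5, frobSq_add, Matrix.transpose_mul, Matrix.mul_assoc, n1, Matrix.mul_zero,
    Matrix.trace_zero, ← eY]
  linarith
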